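/- arXiv:2101.12722 — 2 statements merged into one kernel-verified Lean document; each statement's English description precedes it below -/
import Mathlib

section
/- Let C be an [n, k, d]_q MDS code with d ≥ 5. The total number of vectors of weight d-2, summed over all cosets of C of weight 2, equals (q-1) * C(n,2) * C(n-2, d-2). -/
/-!
The support `D` of a minimum-weight codeword determines it up to a nonzero scalar: the subcode
supported in a `d`-subset `D` is the kernel of a map from dimension `k` to dimension
`n - d = k - 1`, hence nonzero, and two of its nonzero elements become equal after scaling them to
agree at a point of `D`, since the difference has weight less than `d`. Hence there are
`(q - 1) * C(n, d)` codewords of weight `d` (`card_minWeight`).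

A vector `x` of weight `d - 2` lies in a coset of weight 2 exactly when `x = c + y` with `y` of
weight 2 and `c` a codeword; then `c` has weight `d`, so `x` arises from `c` by deleting the two
coordinates in the support of `y`. The pair is determined by `x` because two choices of `y` differ
by a codeword of weight at most `4 < d`. The count is therefore
`(q - 1) * C(n, d) * C(d, 2)` (`card_deleted`), which equals the claimed number by the standard
identity `C(n, d) * C(d, 2) = C(n, 2) * C(n - 2, d - 2)`.
-/

/-- The support of a vector, as a finset. -/
def wtSupp {n : ℕ} {F : Type} [Field F] [DecidableEq F] (x : Fin n → F) : Finset (Fin n) :=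
  Finset.univ.filter fun i => x i ≠ 0

section

variable {n : ℕ} {F : Type} [Field F] [DecidableEq F]

lemma mem_wtSupp (x : Fin n → F) (i : Fin n) : i ∈ wtSupp x ↔ x i ≠ 0 := by
  simp [wtSupp]

lemma card_wtSupp (x : Fin n → F) : (wtSupp x).card = hammingNorm x := rfl

lemma eq_zero_of_supp {C : Submodule F (Fin n → F)} {d : ℕ}
    (hdmin : ∀ c ∈ C, c ≠ 0 → d ≤ hammingNorm c) {c : Fin n → F} (hc : c ∈ C)
    (T : Finset (Fin n)) (hT : T.card < d) (h : ∀ i, i ∉ T → c i = 0) : c = 0 := by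
  by_contra h0
  have h1 := hdmin c hc h0
  have h2 : (wtSupp c).card ≤ T.card := by
    apply Finset.card_le_card
    intro i hi
    by_contra hiT
    exact (mem_wtSupp c i).1 hi (h i hiT)
  rw [card_wtSupp] at h2
  omega

variable [Fintype F]

open Classical in
/-- The codewords with support a given `d`-subset are the nonzero points of a line. -/
lemma card_fiber {C : Submodule F (Fin n → F)} {d : ℕ} (hd : 0 < d)
    (hrank : n < Module.finrank F C + d)
    (hdmin : ∀ c ∈ C, c ≠ 0 → d ≤ hammingNorm c) (D : Finset (Fin n)) (hD : D.card = d) :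
    (Finset.univ.filter fun c : Fin n → F => c ∈ C ∧ wtSupp c = D).card
      = Fintype.card F - 1 := by
  -- Restriction to the coordinates outside `D` has a nontrivial kernel by dimension.
  let f : C →ₗ[F] (↥(Dᶜ) → F) := (LinearMap.funLeft F F Subtype.val) ∘ₗ C.subtype
  have hker : LinearMap.ker f ≠ ⊥ := by
    apply LinearMap.ker_ne_bot_of_finrank_lt
    rw [Module.finrank_fintype_fun_eq_card, Fintype.card_coe, Finset.card_compl,
      Fintype.card_fin, hD]
    have : D.card ≤ n := by simpa using Finset.card_le_univ D
    omega
  obtain ⟨⟨c₀, hc₀⟩, hk, hne⟩ := Submodule.exists_mem_ne_zero_of_ne_bot hker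
  have hne0 : c₀ ≠ 0 := fun h => hne (Subtype.ext h)
  have hout : ∀ i, i ∉ D → c₀ i = 0 := fun i hi =>
    congrFun (LinearMap.mem_ker.1 hk) ⟨i, Finset.mem_compl.2 hi⟩
  have hsupp : ∀ c ∈ C, c ≠ 0 → (∀ i, i ∉ D → c i = 0) → wtSupp c = D := by
    intro c hc h0 ho
    apply Finset.eq_of_subset_of_card_le
    · intro i hi
      by_contra hiD
      exact (mem_wtSupp c i).1 hi (ho i hiD)
    · rw [hD, card_wtSupp]
      exact hdmin c hc h0
  have hs₀ := hsupp c₀ hc₀ hne0 hout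
  obtain ⟨j, hj⟩ : D.Nonempty := Finset.card_pos.1 (by omega)
  have hj0 : c₀ j ≠ 0 := (mem_wtSupp _ _).1 (hs₀ ▸ hj)
  have hcard : (Finset.univ.erase (0 : F)).card = Fintype.card F - 1 := by
    rw [Finset.card_erase_of_mem (Finset.mem_univ _), Finset.card_univ]
  rw [← hcard]
  symm
  apply Finset.card_bij (fun a _ => a • c₀)
  · intro a ha
    have ha0 : a ≠ 0 := Finset.ne_of_mem_erase ha
    have hm := C.smul_mem a hc₀
    simp only [Finset.mem_filter, Finset.mem_univ, true_and]
    exact ⟨hm, hsupp _ hm (smul_ne_zero ha0 hne0) fun i hi => by simp [hout i hi]⟩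
  · intro a _ b _ hab
    exact mul_right_cancel₀ hj0 (congrFun hab j)
  · intro c hc
    simp only [Finset.mem_filter, Finset.mem_univ, true_and] at hc
    obtain ⟨hcC, hcD⟩ := hc
    have hcj : c j ≠ 0 := (mem_wtSupp _ _).1 (hcD ▸ hj)
    refine ⟨c j / c₀ j, by simp [hcj, hj0], ?_⟩
    -- The scalar is chosen to cancel coordinate `j`, leaving support in `D.erase j`.
    have hz := eq_zero_of_supp hdmin (C.sub_mem (C.smul_mem (c j / c₀ j) hc₀) hcC) (D.erase j)
      (by rw [Finset.card_erase_of_mem hj]; omega) (by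
        intro i hi
        by_cases hij : i = j
        · subst hij
          simp [hj0]
        · have hiD : i ∉ D := fun h => hi (Finset.mem_erase.2 ⟨hij, h⟩)
          have : c i = 0 := by
            by_contra h
            exact hiD (hcD ▸ (mem_wtSupp c i).2 h)
          simp [hout i hiD, this])
    exact sub_eq_zero.1 hz

open Classical in
lemma card_minWeight {C : Submodule F (Fin n → F)} {d : ℕ} (hd : 0 < d)
    (hrank : n < Module.finrank F C + d)
    (hdmin : ∀ c ∈ C, c ≠ 0 → d ≤ hammingNorm c) :
    (Finset.univ.filter fun c : Fin n → F => c ∈ C ∧ hammingNorm c = d).card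
      = n.choose d * (Fintype.card F - 1) := by
  rw [Finset.card_eq_sum_card_fiberwise (f := wtSupp)
    (t := Finset.powersetCard d Finset.univ)]
  · rw [Finset.sum_congr rfl (g := fun _ => Fintype.card F - 1)]
    · simp
    · intro D hD
      have hD' := (Finset.mem_powersetCard.1 hD).2
      rw [← card_fiber hd hrank hdmin D hD', Finset.filter_filter]
      congr 1
      ext c
      simp only [Finset.mem_filter, Finset.mem_univ, true_and]
      constructor
      · rintro ⟨⟨h1, -⟩, h2⟩
        exact ⟨h1, h2⟩
      · rintro ⟨h1, h2⟩
        exact ⟨⟨h1, by rw [← card_wtSupp, h2, hD']⟩, h2⟩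
  · intro c hc
    simp only [Finset.coe_filter, Finset.mem_univ, true_and, Set.mem_ofPred_eq] at hc
    simp [Finset.mem_powersetCard, card_wtSupp, hc.2]

open Classical in
/-- Deleting two support coordinates gives a bijection from pairs (codeword `c` of weight `d`,
2-subset of its support) onto the vectors of weight `d - 2` in cosets of weight 2. -/
lemma card_deleted {C : Submodule F (Fin n → F)} {d : ℕ} (hd : 5 ≤ d)
    (hdmin : ∀ c ∈ C, c ≠ 0 → d ≤ hammingNorm c) :
    (Finset.univ.filter fun x : Fin n → F =>
        IsLeast {w : ℕ | ∃ y : Fin n → F, y - x ∈ C ∧ hammingNorm y = w} 2 ∧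
        hammingNorm x = d - 2).card =
      (Finset.univ.filter fun c : Fin n → F => c ∈ C ∧ hammingNorm c = d).card
        * d.choose 2 := by
  have hsig : ((Finset.univ.filter fun c : Fin n → F => c ∈ C ∧ hammingNorm c = d).sigma
      fun c => Finset.powersetCard 2 (wtSupp c)).card =
      (Finset.univ.filter fun c : Fin n → F => c ∈ C ∧ hammingNorm c = d).card
        * d.choose 2 := by
    rw [Finset.card_sigma, Finset.sum_congr rfl (g := fun _ => d.choose 2)]
    · simp
    · intro c hc
      rw [Finset.card_powersetCard, card_wtSupp, (Finset.mem_filter.1 hc).2.2]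
  rw [← hsig]
  symm
  apply Finset.card_bij (fun (p : Σ _ : Fin n → F, Finset (Fin n)) _ =>
    fun i => if i ∈ p.2 then (0 : F) else p.1 i)
  · rintro ⟨c, S⟩ hp
    simp only [Finset.mem_sigma, Finset.mem_filter, Finset.mem_univ, true_and,
      Finset.mem_powersetCard] at hp ⊢
    obtain ⟨⟨hcC, hcd⟩, hS, hS2⟩ := hp
    have hx : hammingNorm (fun i => if i ∈ S then (0 : F) else c i) = d - 2 := by
      have : wtSupp (fun i => if i ∈ S then (0 : F) else c i) = wtSupp c \ S := by
        ext i
        by_cases hi : i ∈ S <;> simp [mem_wtSupp, hi]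
      rw [← card_wtSupp, this, Finset.card_sdiff_of_subset hS, card_wtSupp, hcd, hS2]
    refine ⟨⟨⟨fun i => if i ∈ S then -c i else 0, ?_, ?_⟩, ?_⟩, hx⟩
    · convert C.neg_mem hcC using 1
      ext i
      by_cases hi : i ∈ S <;> simp [hi]
    · rw [← card_wtSupp, ← hS2]
      congr 1
      ext i
      by_cases hi : i ∈ S
      · have := (mem_wtSupp c i).1 (hS hi)
        simp [mem_wtSupp, hi, this]
      · simp [mem_wtSupp, hi]
    · rintro w ⟨y, hyC, rfl⟩
      by_contra hlt
      generalize (fun i => if i ∈ S then (0 : F) else c i) = x at *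
      have hz := eq_zero_of_supp hdmin hyC (wtSupp y ∪ wtSupp x) (by
        have := Finset.card_union_le (wtSupp y) (wtSupp x)
        rw [card_wtSupp, card_wtSupp] at this
        omega) (by
        intro i hi
        simp only [Finset.mem_union, mem_wtSupp, not_or, not_not] at hi
        simp [hi.1, hi.2])
      rw [sub_eq_zero.1 hz] at hlt
      omega
  · rintro ⟨c, S⟩ hp ⟨c', S'⟩ hp' h
    simp only [Finset.mem_sigma, Finset.mem_filter, Finset.mem_univ, true_and,
      Finset.mem_powersetCard] at hp hp' h
    obtain ⟨⟨hcC, hcd⟩, hS, hS2⟩ := hp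
    obtain ⟨⟨hcC', hcd'⟩, hS', hS2'⟩ := hp'
    have hz := eq_zero_of_supp hdmin (C.sub_mem hcC hcC') (S ∪ S') (by
      have := Finset.card_union_le S S'
      omega) (by
      intro i hi
      simp only [Finset.mem_union, not_or] at hi
      have := congrFun h i
      simp only [hi.1, hi.2, if_false] at this
      simp [this])
    obtain rfl := sub_eq_zero.1 hz
    have hSS : S = S' := by
      ext i
      have hi := congrFun h i
      have h1 := fun hh => (mem_wtSupp c i).1 (@hS i hh)
      have h2 := fun hh => (mem_wtSupp c i).1 (@hS' i hh)
      by_cases a : i ∈ S <;> by_cases b : i ∈ S' <;> simp_all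
    rw [hSS]
  · intro x hx
    simp only [Finset.mem_filter, Finset.mem_univ, true_and] at hx
    obtain ⟨⟨⟨y, hyC, hy2⟩, -⟩, hxd⟩ := hx
    have hcC : x - y ∈ C := by simpa using C.neg_mem hyC
    have hne : x - y ≠ 0 := by
      intro h
      rw [sub_eq_zero.1 h] at hxd
      omega
    have hdc := hdmin _ hcC hne
    have hsub : wtSupp (x - y) ⊆ wtSupp x ∪ wtSupp y := by
      intro i hi
      by_contra hh
      simp only [Finset.mem_union, mem_wtSupp, not_or, not_not] at hh
      exact (mem_wtSupp _ i).1 hi (by simp [hh.1, hh.2])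
    have hle := Finset.card_le_card hsub
    have hui := Finset.card_union_add_card_inter (wtSupp x) (wtSupp y)
    simp only [card_wtSupp] at hle hui
    -- Equality in the triangle inequality forces disjoint supports.
    have hdisj : wtSupp x ∩ wtSupp y = ∅ := Finset.card_eq_zero.1 (by omega)
    have hx0 : ∀ i, y i ≠ 0 → x i = 0 := by
      intro i hi
      by_contra h
      have : i ∈ wtSupp x ∩ wtSupp y :=
        Finset.mem_inter.2 ⟨(mem_wtSupp _ _).2 h, (mem_wtSupp _ _).2 hi⟩
      simp [hdisj] at this
    refine ⟨⟨x - y, wtSupp y⟩, ?_, ?_⟩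
    · simp only [Finset.mem_sigma, Finset.mem_filter, Finset.mem_univ, true_and,
        Finset.mem_powersetCard]
      refine ⟨⟨hcC, by omega⟩, ?_, hy2⟩
      intro i hi
      rw [mem_wtSupp] at hi ⊢
      simpa [hx0 i hi] using hi
    · ext i
      by_cases hi : y i = 0
      · simp [mem_wtSupp, hi]
      · simp [mem_wtSupp, hi, hx0 i hi]

end

/-- Lemma 6.2: let `C` be an `[n,k,d]_q` MDS code with `d ≥ 5`. The total number of
vectors of weight `d-2` lying in cosets of `C` of weight 2 equals
`(q-1) * C(n,2) * C(n-2, d-2)`. -/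
theorem total_weight_dminus2_in_weight2_cosets (n k d q : ℕ) (F : Type) [Field F]
    [Fintype F] [DecidableEq F] (hq : Fintype.card F = q)
    (C : Submodule F (Fin n → F)) (hk : Module.finrank F C = k)
    (hmds : d = n - k + 1) (hd : 5 ≤ d)
    (hdmin : ∀ c ∈ C, c ≠ 0 → d ≤ hammingNorm c)
    (hdex : ∃ c ∈ C, c ≠ 0 ∧ hammingNorm c = d) :
    Nat.card {x : Fin n → F //
        IsLeast {w : ℕ | ∃ y : Fin n → F, y - x ∈ C ∧ hammingNorm y = w} 2 ∧
        hammingNorm x = d - 2} =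
      (q - 1) * n.choose 2 * (n - 2).choose (d - 2) := by
  classical
  subst hq hk
  have hrank : n < Module.finrank F C + d := by omega
  have hchoose := Nat.choose_mul (n := n) (show 2 ≤ d by omega)
  rw [Nat.card_eq_fintype_card, Fintype.card_subtype, card_deleted hd hdmin,
    card_minWeight (by omega) hrank hdmin, mul_right_comm, hchoose]
  ring
end

section
/- Let q ≥ 7 be an even prime power, K a conic in PG(2,q) with nucleus O, P1, P2 distinct points of K, and K** = K \ {P1, P2}. Then the points of PG(2,q) off K** split into: 3(q-1) points each on exactly (q-2)/2 bisecants of K**, (q-1)(q-2) points each on exactly (q-4)/2 bisecants of K**, and 3 points (O, P1, P2) on 0 bisecants of K**. -/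
/-!
Write `f(x) = x₀x₂ - x₁²`. In characteristic two its polar form `B(v,w) = v₀w₂ + v₂w₀` is
alternating with radical spanned by `(0,1,0)`, and distinct points of the conic are never conjugate
under `B` (`DSC.eq_of_bf`). The coordinate lines `x₀ = 0` and `x₂ = 0` are tangents, so the nucleus
is `O = (0,1,0)` (`DSC.nucleus_coords`).

For a point `Q` off the conic, the orthogonal reflection in `Q` sends each conic point `v` to the
other intersection of the line `Qv` with the conic, and fixes `v` exactly when `B(Q,v) = 0`
(`DSC.exists_second`). If moreover `Q ≠ O`, this involution of the `q + 1` conic points has exactly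
one fixed point `t`, since `B(Q,·)` only sees the coordinates `0` and `2` and squaring is bijective
(`DSC.exists_tangent_pt`). The bisecants of the doubly shortened conic through `Q` are the
two-element orbits avoiding `P₁` and `P₂`, so twice their number is `q + 1` minus the size of
`{t, P₁, P₂, σP₁, σP₂}` (`DSC.bis_count`). That set has three elements if `P₁ = t`, `P₂ = t` or
`σP₁ = P₂`, that is, if `Q` is on a side of the triangle `O P₁ P₂`, and five otherwise. Each side
has `q - 1` points besides its endpoints, none of them on the conic; the last class is
counted by subtracting from the `q² + q + 1` points of the plane.
-/

/-- The conic `{(1,t,t²) : t ∈ F_q} ∪ {(0,0,1)}` in `PG(2,q)`, i.e. the zero set of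
the quadratic form `x₀x₂ = x₁²`. -/
def conicSet (F : Type*) [Field F] : Set (Projectivization F (Fin 3 → F)) :=
  {p | p.rep 0 * p.rep 2 = p.rep 1 ^ 2}

/-- A point of `PG(2,q)` lies on a line (a 2-dimensional subspace of `F³`). -/
def onLine (F : Type*) [Field F] (p : Projectivization F (Fin 3 → F))
    (L : Submodule F (Fin 3 → F)) : Prop :=
  p.submodule ≤ L

/-- A line of `PG(2,q)`: a 2-dimensional linear subspace of `F³`. -/
def isLine (F : Type*) [Field F] (L : Submodule F (Fin 3 → F)) : Prop :=
  Module.finrank F L = 2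

/-- A bisecant of a point set `S`: a line meeting `S` in exactly two points. -/
def isBisecant (F : Type*) [Field F] (S : Set (Projectivization F (Fin 3 → F)))
    (L : Submodule F (Fin 3 → F)) : Prop :=
  isLine F L ∧ Nat.card {p : Projectivization F (Fin 3 → F) // p ∈ S ∧ onLine F p L} = 2

/-- A tangent (unisecant) of a point set `S`: a line meeting `S` in exactly one point. -/
def isTangent (F : Type*) [Field F] (S : Set (Projectivization F (Fin 3 → F)))
    (L : Submodule F (Fin 3 → F)) : Prop :=
  isLine F L ∧ Nat.card {p : Projectivization F (Fin 3 → F) // p ∈ S ∧ onLine F p L} = 1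

/-- The number of bisecants of `S` through a point `p`. -/
noncomputable def bisecantCount (F : Type*) [Field F] (S : Set (Projectivization F (Fin 3 → F)))
    (p : Projectivization F (Fin 3 → F)) : ℕ :=
  Nat.card {L : Submodule F (Fin 3 → F) // isBisecant F S L ∧ onLine F p L}

/-- The number of tangents of `S` through a point `p`. -/
noncomputable def tangentCount (F : Type*) [Field F] (S : Set (Projectivization F (Fin 3 → F)))
    (p : Projectivization F (Fin 3 → F)) : ℕ :=
  Nat.card {L : Submodule F (Fin 3 → F) // isTangent F S L ∧ onLine F p L}

/-- An external point of the conic: off the conic, lying on exactly two tangents. -/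
def isExternal (F : Type*) [Field F] (p : Projectivization F (Fin 3 → F)) : Prop :=
  p ∉ conicSet F ∧ tangentCount F (conicSet F) p = 2

/-- An internal point of the conic: off the conic, lying on no tangent. -/
def isInternal (F : Type*) [Field F] (p : Projectivization F (Fin 3 → F)) : Prop :=
  p ∉ conicSet F ∧ tangentCount F (conicSet F) p = 0

namespace DSC

open Projectivization

variable {F : Type} [Field F]

/-! ### Points, lines and the quadratic form -/

/-- The points of `PG(2,q)`. -/
abbrev PG (F : Type) [Field F] := Projectivization F (Fin 3 → F)

/-- The quadratic form `x₀x₂ - x₁²` defining the conic. -/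
def qf (v : Fin 3 → F) : F := v 0 * v 2 - v 1 ^ 2

/-- The form `v₀w₂ + v₂w₀`. In characteristic two it is the polarization of `qf`, the term
`-2v₁w₁` being zero. -/
def bf (v w : Fin 3 → F) : F := v 0 * w 2 + v 2 * w 0

/-- The line through two points (a line only when the points differ). -/
def join (p r : PG F) : Submodule F (Fin 3 → F) := Submodule.span F {p.rep, r.rep}

lemma bf_comm (v w : Fin 3 → F) : bf v w = bf w v := by simp only [bf]; ring

lemma qf_smul (c : F) (v : Fin 3 → F) : qf (c • v) = c ^ 2 * qf v := by
  simp only [qf, Pi.smul_apply, smul_eq_mul]; ring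

lemma bf_smul_left (c : F) (v w : Fin 3 → F) : bf (c • v) w = c * bf v w := by
  simp only [bf, Pi.smul_apply, smul_eq_mul]; ring

lemma bf_comb (a b : F) (v w u : Fin 3 → F) :
    bf u (a • v + b • w) = a * bf u v + b * bf u w := by
  simp only [bf, Pi.add_apply, Pi.smul_apply, smul_eq_mul]; ring

lemma qf_comb (h2 : (2 : F) = 0) (a b : F) (v w : Fin 3 → F) :
    qf (a • v + b • w) = a ^ 2 * qf v + a * b * bf v w + b ^ 2 * qf w := by
  simp only [qf, bf, Pi.add_apply, Pi.smul_apply, smul_eq_mul]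
  linear_combination (-a * b * v 1 * w 1) * h2

lemma bf_self (h2 : (2 : F) = 0) (v : Fin 3 → F) : bf v v = 0 := by
  simp only [bf]; linear_combination (v 0 * v 2) * h2

lemma mem_conic (p : PG F) : p ∈ conicSet F ↔ qf p.rep = 0 := by
  simp only [conicSet, Set.mem_ofPred_eq, qf, sub_eq_zero]

lemma onLine_iff (p : PG F) (L : Submodule F (Fin 3 → F)) : onLine F p L ↔ p.rep ∈ L := by
  rw [onLine, submodule_eq, Submodule.span_singleton_le_iff_mem]

lemma eq_of_rep (p r : PG F) (c : F) (h : p.rep = c • r.rep) : p = r := by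
  rw [← p.mk_rep, ← r.mk_rep, mk_eq_mk_iff']
  exact ⟨c, h.symm⟩

lemma eq_mk_of_rep (p : PG F) (v : Fin 3 → F) (hv : v ≠ 0) (c : F) (h : p.rep = c • v) :
    p = mk F v hv := by
  rw [← p.mk_rep, mk_eq_mk_iff']
  exact ⟨c, h.symm⟩

lemma rep_mk (v : Fin 3 → F) (hv : v ≠ 0) : ∃ c : F, c ≠ 0 ∧ (mk F v hv).rep = c • v := by
  obtain ⟨a, ha⟩ := exists_smul_eq_mk_rep F v hv
  exact ⟨a, a.ne_zero, ha.symm⟩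

lemma mk_mem_conic (v : Fin 3 → F) (hv : v ≠ 0) : mk F v hv ∈ conicSet F ↔ qf v = 0 := by
  obtain ⟨c, hc, h⟩ := rep_mk v hv
  rw [mem_conic, h, qf_smul]
  simp [hc]

lemma onLine_mk (v : Fin 3 → F) (hv : v ≠ 0) (L : Submodule F (Fin 3 → F)) :
    onLine F (mk F v hv) L ↔ v ∈ L := by
  rw [onLine, submodule_mk, Submodule.span_singleton_le_iff_mem]

lemma onLine_join (p r s : PG F) :
    onLine F s (join p r) ↔ ∃ a b : F, a • p.rep + b • r.rep = s.rep := by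
  rw [onLine_iff, join, Submodule.mem_span_pair]

lemma onLine_join_left (p r : PG F) : onLine F p (join p r) :=
  (onLine_join _ _ _).2 ⟨1, 0, by simp⟩

lemma onLine_join_right (p r : PG F) : onLine F r (join p r) :=
  (onLine_join _ _ _).2 ⟨0, 1, by simp⟩

lemma linInd (p r : PG F) (h : p ≠ r) : LinearIndependent F ![p.rep, r.rep] :=
  linearIndependent_pair_iff_ne.2 h

lemma isLine_join (p r : PG F) (h : p ≠ r) : isLine F (join p r) := by
  have := finrank_span_eq_card (linInd p r h)
  rw [Matrix.range_cons_cons_empty, Fintype.card_fin] at this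
  exact this

/-- A line is the join of any two distinct points on it. -/
lemma line_eq_join (L : Submodule F (Fin 3 → F)) (hL : isLine F L) (p r : PG F) (h : p ≠ r)
    (hp : onLine F p L) (hr : onLine F r L) : L = join p r := by
  rw [onLine_iff] at hp hr
  symm
  apply Submodule.eq_of_le_of_finrank_eq
  · rw [join, Submodule.span_le]
    rintro x (rfl | rfl) <;> assumption
  · rw [isLine_join p r h, hL]

/-! ### The polar form and the second intersection point -/

/-- Two points of the conic conjugate under the polar form coincide. -/
lemma eq_of_bf (h2 : (2 : F) = 0) (p r : PG F) (hp : p ∈ conicSet F) (hr : r ∈ conicSet F)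
    (h : bf p.rep r.rep = 0) : p = r := by
  have : CharP F 2 := CharTwo.of_one_ne_zero_of_two_eq_zero one_ne_zero h2
  rw [mem_conic] at hp hr
  have hp0 := p.rep_nonzero
  have hr0 := r.rep_nonzero
  have key : ∀ x y : F, x ^ 2 = y ^ 2 → x = y := fun x y hxy => CharTwo.sq_injective hxy
  generalize hv : p.rep = v at hp h hp0
  generalize hw : r.rep = w at hr h hr0
  have hz : ∀ u : Fin 3 → F, qf u = 0 → u 0 = 0 → u 2 = 0 → u = 0 := by
    intro u h h0 h3
    have : u 1 = 0 := by simpa [qf, h0] using h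
    ext i; fin_cases i
    exacts [h0, this, h3]
  simp only [qf, bf] at hp hr h
  by_cases h0 : w 0 = 0
  · have h20 : w 2 ≠ 0 := fun h' => hr0 (hz w hr h0 h')
    have h00 : v 0 = 0 := by simpa [h0, h20] using h
    have h1 : v 1 = 0 := by simpa [h00] using hp
    have h1' : w 1 = 0 := by simpa [h0] using hr
    refine eq_of_rep p r (v 2 / w 2) ?_
    rw [hv, hw]
    ext i; fin_cases i
    · simp [h0, h00]
    · simp [h1, h1']
    · simp [h20]
  · refine eq_of_rep p r (v 0 / w 0) ?_
    rw [hv, hw]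
    have e1 : v 1 * w 0 = v 0 * w 1 := by
      apply key
      linear_combination (-w 0 ^ 2) * hp + (v 0 ^ 2) * hr + v 0 * w 0 * h - v 0 ^2 * w 0 * w 2 * h2
    have e2 : v 2 * w 0 = v 0 * w 2 := by linear_combination h - v 0 * w 2 * h2
    ext i; fin_cases i
    · simp [h0]
    · simp; field_simp; linear_combination e1
    · simp; field_simp; linear_combination e2

/-- The second intersection point of the line `Qv` with the conic, for `Q` off the conic and `v`
on it; it equals `v` exactly when `Qv` is tangent, i.e. when `v` and `Q` are conjugate. -/
lemma exists_second (h2 : (2 : F) = 0) (Q v : PG F) (hQ : Q ∉ conicSet F) (hv : v ∈ conicSet F) :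
    ∃ w : PG F, w ∈ conicSet F ∧
      (∀ p ∈ conicSet F, onLine F p (join Q v) ↔ p = v ∨ p = w) ∧
      (w = v ↔ bf Q.rep v.rep = 0) := by
  rw [mem_conic] at hQ hv
  -- the orthogonal reflection in `Q`, applied to `v` and multiplied by `qf Q`
  set u : Fin 3 → F := (- bf Q.rep v.rep) • Q.rep + qf Q.rep • v.rep with hu
  have hqu : qf u = 0 := by
    rw [hu, qf_comb h2, hv]; ring
  have hu0 : u ≠ 0 := by
    intro h0
    have e : qf Q.rep • v.rep = bf Q.rep v.rep • Q.rep := by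
      rw [hu] at h0
      rw [← sub_eq_zero, ← h0]; module
    have e1 := congrArg qf e
    rw [qf_smul, qf_smul, hv, mul_zero] at e1
    have hb : bf Q.rep v.rep = 0 := by
      by_contra hb
      exact mul_ne_zero (pow_ne_zero 2 hb) hQ e1.symm
    rw [hb, zero_smul] at e
    exact (smul_ne_zero hQ v.rep_nonzero) e
  have hw : mk F u hu0 ∈ conicSet F := (mk_mem_conic _ _).2 hqu
  have huL : onLine F (mk F u hu0) (join Q v) := by
    rw [onLine_mk, join, Submodule.mem_span_pair]
    exact ⟨_, _, rfl⟩
  refine ⟨mk F u hu0, hw, ?_, ?_⟩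
  · intro p hp
    constructor
    · intro h
      obtain ⟨a, b, hab⟩ := (onLine_join _ _ _).1 h
      rw [mem_conic, ← hab, qf_comb h2, hv] at hp
      have hp' : a * (a * qf Q.rep + b * bf Q.rep v.rep) = 0 := by linear_combination hp
      rcases mul_eq_zero.1 hp' with rfl | h'
      · left
        exact eq_of_rep _ _ b (by rw [← hab]; simp)
      · right
        apply eq_mk_of_rep _ _ _ (b / qf Q.rep)
        rw [← hab, hu, smul_add, smul_smul, smul_smul, div_mul_cancel₀ _ hQ]
        congr 2
        field_simp
        linear_combination h'
    · rintro (rfl | rfl)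
      · exact onLine_join_right _ _
      · exact huL
  · constructor
    · intro h
      have hQv : bf v.rep u = - bf Q.rep v.rep ^ 2 := by
        rw [hu, bf_comb, bf_self h2, bf_comm v.rep]; ring
      obtain ⟨c, hc, h'⟩ := rep_mk u hu0
      rw [h] at h'
      have := bf_self h2 v.rep
      nth_rewrite 1 [h'] at this
      rw [bf_smul_left, bf_comm, hQv] at this
      simpa [hc] using this
    · intro h
      symm
      apply eq_mk_of_rep _ _ _ (qf Q.rep)⁻¹
      rw [hu, h, neg_zero, zero_smul, zero_add, smul_smul, inv_mul_cancel₀ hQ, one_smul]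

/-! ### Counting bisecants by an involution -/

/-- On a finite set with an involution `σ` having a single fixed point `t`, this counts the points
moved by `σ` whose orbit avoids `a` and `b`. The excluded set `{t, a, b, σ a, σ b}` has five
elements, or three when one of the listed coincidences occurs. -/
lemma inv_count {κ : Type*} [Fintype κ] [DecidableEq κ] (σ : κ → κ) (hσ : ∀ x, σ (σ x) = x)
    (t : κ) (ht : ∀ x, σ x = x ↔ x = t) (a b : κ) (hab : a ≠ b) :
    (Finset.univ.filter fun x => σ x ≠ x ∧ x ≠ a ∧ x ≠ b ∧ σ x ≠ a ∧ σ x ≠ b).card +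
      (if a = t ∨ b = t ∨ σ a = b then 3 else 5) = Fintype.card κ := by
  have e : (Finset.univ.filter fun x => σ x ≠ x ∧ x ≠ a ∧ x ≠ b ∧ σ x ≠ a ∧ σ x ≠ b) =
      ({t, a, b, σ a, σ b} : Finset κ)ᶜ := by
    ext x
    simp only [Finset.mem_filter, Finset.mem_univ, true_and, Finset.mem_compl,
      Finset.mem_insert, Finset.mem_singleton]
    grind
  have c : ({t, a, b, σ a, σ b} : Finset κ).card =
      (if a = t ∨ b = t ∨ σ a = b then 3 else 5) := by
    have htt := (ht t).2 rfl
    split_ifs with h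
    · rcases h with rfl | rfl | h
      · have : ({a, a, b, σ a, σ b} : Finset κ) = {a, b, σ b} := by
          rw [htt]; ext; simp; grind
        rw [this, Finset.card_eq_three]
        exact ⟨a, b, σ b, hab, by grind, by grind, rfl⟩
      · have : ({b, a, b, σ a, σ b} : Finset κ) = {b, a, σ a} := by
          rw [htt]; ext; simp; grind
        rw [this, Finset.card_eq_three]
        exact ⟨b, a, σ a, hab.symm, by grind, by grind, rfl⟩
      · have : ({t, a, b, σ a, σ b} : Finset κ) = {t, a, b} := by
          rw [← h, hσ]; ext; simp; grind
        rw [this, Finset.card_eq_three]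
        exact ⟨t, a, b, by grind, by grind, hab, rfl⟩
    · push Not at h
      obtain ⟨h1, h3, h4⟩ := h
      rw [Finset.card_insert_of_notMem, Finset.card_insert_of_notMem,
        Finset.card_insert_of_notMem, Finset.card_pair] <;> grind
  rw [e, ← c, Finset.card_compl_add_card]

lemma exists_sqrt [Fintype F] (h2 : (2 : F) = 0) (a : F) : ∃ s : F, s ^ 2 = a := by
  have : CharP F 2 := CharTwo.of_one_ne_zero_of_two_eq_zero one_ne_zero h2
  obtain ⟨s, hs⟩ := FiniteField.isSquare_of_char_two (ringChar.eq F 2 ▸ rfl) a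
  exact ⟨s, by rw [hs, sq]⟩

/-- A point other than the nucleus `(0,1,0)` is conjugate to exactly one point of the conic. -/
lemma exists_tangent_pt [Fintype F] (h2 : (2 : F) = 0) (Q : PG F)
    (hQO : ¬ (Q.rep 0 = 0 ∧ Q.rep 2 = 0)) :
    ∃ t ∈ conicSet F, ∀ v ∈ conicSet F, bf Q.rep v.rep = 0 ↔ v = t := by
  obtain ⟨s, hs⟩ := exists_sqrt h2 (Q.rep 0 * Q.rep 2)
  set u : Fin 3 → F := ![Q.rep 0, s, Q.rep 2] with hu
  have hu0 : u ≠ 0 := by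
    intro h
    exact hQO ⟨congrFun h 0, congrFun h 2⟩
  have hb : ∀ w, bf u w = bf Q.rep w := fun w => by simp [bf, hu]
  have hK : mk F u hu0 ∈ conicSet F := by
    rw [mk_mem_conic]; simp [qf, hu, hs]
  obtain ⟨c, hc, h⟩ := rep_mk u hu0
  refine ⟨mk F u hu0, hK, fun v hv => ⟨fun h' => ?_, fun h' => ?_⟩⟩
  · refine (eq_of_bf h2 _ _ hK hv ?_).symm
    rw [h, bf_smul_left, hb, h', mul_zero]
  · have := bf_self h2 v.rep
    nth_rewrite 1 [h'] at this
    rw [h, bf_smul_left, hb] at this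
    simpa [hc] using this

lemma card_conic [Fintype F] : Nat.card {v : PG F // v ∈ conicSet F} = Fintype.card F + 1 := by
  have hp : ∀ t : F, (![1, t, t ^ 2] : Fin 3 → F) ≠ 0 := fun t h => one_ne_zero (congrFun h 0)
  have hi : (![0, 0, 1] : Fin 3 → F) ≠ 0 := fun h => one_ne_zero (congrFun h 2)
  let g : Option F → PG F := fun o => o.elim (mk F _ hi) (fun t => mk F _ (hp t))
  have hg : Function.Injective g := by
    rintro (_ | s) (_ | t) h
    · rfl
    · obtain ⟨a, ha⟩ := (mk_eq_mk_iff' _ _ _ _ _).1 h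
      have h0 : a = 0 := by simpa using congrFun ha 0
      have := congrFun ha 2
      simp [h0] at this
    · obtain ⟨a, ha⟩ := (mk_eq_mk_iff' _ _ _ _ _).1 h
      have := congrFun ha 0
      simp at this
    · obtain ⟨a, ha⟩ := (mk_eq_mk_iff' _ _ _ _ _).1 h
      have h0 : a = 1 := by simpa using congrFun ha 0
      have := congrFun ha 1
      simp [h0] at this
      rw [this]
  have hr : Set.range g = conicSet F := by
    ext v
    constructor
    · rintro ⟨_ | t, rfl⟩
      · simp [g, mk_mem_conic, qf]
      · simp [g, mk_mem_conic, qf]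
    · intro hv
      have hv0 := v.rep_nonzero
      rw [mem_conic, qf] at hv
      by_cases h0 : v.rep 0 = 0
      · refine ⟨none, (eq_mk_of_rep v _ hi (v.rep 2) ?_).symm⟩
        have h1 : v.rep 1 = 0 := by simpa [h0] using hv
        ext i; fin_cases i
        · simp [h0]
        · simp [h1]
        · simp
      · refine ⟨some (v.rep 1 / v.rep 0), (eq_mk_of_rep v _ (hp _) (v.rep 0) ?_).symm⟩
        ext i; fin_cases i
        · simp
        · simp; field_simp
        · simp; field_simp; linear_combination hv
  rw [← hr, ← Fintype.card_option, ← Nat.card_eq_fintype_card]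
  exact Nat.card_range_of_injective hg

/-- Twice the number of bisecants of the doubly shortened conic through a point off the conic other
than the nucleus: the second-intersection map is an involution of the conic whose only fixed point
is the point of tangency, and the bisecants in question are its two-element orbits avoiding
`P₁` and `P₂`. -/
lemma bis_count [Fintype F] (h2 : (2 : F) = 0) (Q : PG F) (hQ : Q ∉ conicSet F)
    (hQO : ¬ (Q.rep 0 = 0 ∧ Q.rep 2 = 0))
    (P₁ P₂ : PG F) (hP1 : P₁ ∈ conicSet F) (hP2 : P₂ ∈ conicSet F) (hne : P₁ ≠ P₂)
    (d : Prop) [Decidable d]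
    (hd : d ↔ bf Q.rep P₁.rep = 0 ∨ bf Q.rep P₂.rep = 0 ∨ onLine F P₂ (join Q P₁)) :
    2 * bisecantCount F (conicSet F \ {P₁, P₂}) Q + (if d then 3 else 5) =
      Fintype.card F + 1 := by
  classical
  have : Finite (PG F) := inferInstance
  have : Fintype (PG F) := Fintype.ofFinite _
  have : Finite (Submodule F (Fin 3 → F)) := inferInstance
  have : Fintype (Submodule F (Fin 3 → F)) := Fintype.ofFinite _
  have hQne : ∀ v ∈ conicSet F, Q ≠ v := fun v hv h => hQ (h ▸ hv)
  choose τ hτK hτ hτf using fun v : {v : PG F // v ∈ conicSet F} =>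
    exists_second h2 Q v.1 hQ v.2
  set σ : {v : PG F // v ∈ conicSet F} → {v : PG F // v ∈ conicSet F} :=
    fun v => ⟨τ v, hτK v⟩ with hσd
  have hσL : ∀ v, onLine F (σ v).1 (join Q v.1) := fun v => (hτ v _ (hτK v)).2 (Or.inr rfl)
  have hjoin : ∀ v, join Q v.1 = join Q (σ v).1 := fun v =>
    line_eq_join _ (isLine_join _ _ (hQne _ v.2)) _ _ (hQne _ (hτK v))
      (onLine_join_left _ _) (hσL v)
  have hσσ : ∀ v, σ (σ v) = v := by
    intro v
    have e1 := (hτ (σ v) v.1 v.2).1 (by rw [← hjoin]; exact onLine_join_right _ _)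
    rcases e1 with e1 | e1
    · have : v = σ v := Subtype.ext e1
      rw [← this, ← this]
    · exact Subtype.ext e1.symm
  obtain ⟨t, htK, ht⟩ := exists_tangent_pt h2 Q hQO
  have hfix : ∀ v, σ v = v ↔ v = ⟨t, htK⟩ := by
    intro v
    rw [Subtype.ext_iff, Subtype.ext_iff, ← ht _ v.2, ← hτf v]
  have key := inv_count σ hσσ ⟨t, htK⟩ hfix ⟨P₁, hP1⟩ ⟨P₂, hP2⟩
    (fun h => hne (congrArg Subtype.val h))
  have hd' : d ↔ ((⟨P₁, hP1⟩ : {v : PG F // v ∈ conicSet F}) = ⟨t, htK⟩ ∨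
      (⟨P₂, hP2⟩ : {v : PG F // v ∈ conicSet F}) = ⟨t, htK⟩ ∨ σ ⟨P₁, hP1⟩ = ⟨P₂, hP2⟩) := by
    rw [hd, ht _ hP1, ht _ hP2, hτ ⟨P₁, hP1⟩ P₂ hP2, Subtype.mk.injEq, Subtype.mk.injEq,
      Subtype.mk.injEq]
    simp only [hne.symm, false_or]
    rw [eq_comm (a := P₂) (b := τ _)]
  rw [← Nat.card_eq_fintype_card (α := {v : PG F // v ∈ conicSet F}), card_conic] at key
  rw [← key]
  congr 1
  swap
  · simp only [hd']
  rw [bisecantCount, Nat.card_eq_fintype_card, Fintype.card_subtype]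
  symm
  rw [Finset.card_eq_sum_card_fiberwise (f := fun v => join Q v.1)
      (t := Finset.univ.filter fun L => isBisecant F (conicSet F \ {P₁, P₂}) L ∧ onLine F Q L)]
  · rw [Finset.sum_const_nat (m := 2), mul_comm]
    intro L hL
    simp only [Finset.mem_filter, Finset.mem_univ, true_and] at hL
    obtain ⟨⟨hL1, hL2⟩, hQL⟩ := hL
    have hL3 := hL2
    rw [Nat.card_eq_fintype_card, Fintype.card_subtype] at hL2
    rw [← hL2]
    refine Finset.card_bij (fun v _ => v.1) ?_ (fun _ _ _ _ h => Subtype.ext h) ?_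
    · intro v hv
      simp only [Finset.mem_filter, Finset.mem_univ, true_and] at hv ⊢
      obtain ⟨⟨-, h3, h4, -, -⟩, rfl⟩ := hv
      refine ⟨⟨v.2, ?_⟩, onLine_join_right _ _⟩
      rintro (h | h)
      · exact h3 (Subtype.ext h)
      · exact h4 (Subtype.ext h)
    · intro v hv
      simp only [Finset.mem_filter, Finset.mem_univ, true_and] at hv
      obtain ⟨⟨hvK, hvP⟩, hvL⟩ := hv
      have hLj := line_eq_join L hL1 Q v (hQne v hvK) hQL hvL
      -- the other point of the doubly shortened conic on `L` is the image of `v`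
      obtain ⟨w, hw, hwv⟩ := Set.exists_ne_of_one_lt_ncard
        (s := {p | p ∈ conicSet F \ {P₁, P₂} ∧ onLine F p L})
        (by rw [← Nat.card_coe_set_eq]; exact lt_of_lt_of_eq one_lt_two hL3.symm) v
      obtain ⟨⟨hwK, hwP⟩, hwL⟩ := hw
      rw [hLj] at hwL
      have hwσ : w = τ ⟨v, hvK⟩ := ((hτ ⟨v, hvK⟩ w hwK).1 hwL).resolve_left hwv
      simp only [Set.mem_insert_iff, Set.mem_singleton_iff, not_or] at hvP hwP
      refine ⟨⟨v, hvK⟩, ?_, rfl⟩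
      simp only [Finset.mem_filter, Finset.mem_univ, true_and, hσd, ne_eq, Subtype.mk.injEq,
        ← hwσ]
      exact ⟨⟨hwv, hvP.1, hvP.2, hwP.1, hwP.2⟩, hLj.symm⟩
  · intro v hv
    simp only [Finset.coe_filter, Finset.mem_univ, true_and, Set.mem_ofPred_eq] at hv ⊢
    obtain ⟨h1, h3, h4, h5, h6⟩ := hv
    refine ⟨⟨isLine_join _ _ (hQne _ v.2), ?_⟩, onLine_join_left _ _⟩
    have e : {p | p ∈ conicSet F \ {P₁, P₂} ∧ onLine F p (join Q v.1)} = {v.1, (σ v).1} := by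
      ext p
      constructor
      · rintro ⟨⟨hp, -⟩, hpL⟩
        exact (hτ v p hp).1 hpL
      · rintro (rfl | rfl)
        · refine ⟨⟨v.2, ?_⟩, onLine_join_right _ _⟩
          rintro (h | h)
          · exact h3 (Subtype.ext h)
          · exact h4 (Subtype.ext h)
        · refine ⟨⟨hτK v, ?_⟩, hσL v⟩
          rintro (h | h)
          · exact h5 (Subtype.ext h)
          · exact h6 (Subtype.ext h)
    have e2 := Set.ncard_pair (a := v.1) (b := (σ v).1) (fun h => h1 (Subtype.ext h.symm))
    rw [← e, ← Nat.card_coe_set_eq] at e2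
    exact e2

/-! ### Sides of the triangle and points on no bisecant -/

lemma side_card [Fintype F] (p r : PG F) (h : p ≠ r) :
    {x : PG F | x ≠ p ∧ x ≠ r ∧ onLine F x (join p r)}.ncard = Fintype.card F - 1 := by
  classical
  have li := LinearIndependent.pair_iff.1 (linInd p r h)
  have h0 : ∀ c : Fˣ, p.rep + (c : F) • r.rep ≠ 0 := fun c hc =>
    one_ne_zero (li 1 c (by rw [one_smul]; exact hc)).1
  let g : Fˣ → PG F := fun c => mk F _ (h0 c)
  have hg : Function.Injective g := by
    intro c d hcd
    obtain ⟨a, ha⟩ := (mk_eq_mk_iff' _ _ _ _ _).1 hcd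
    obtain ⟨e1, e2⟩ := li (a - 1) (a * d - c) (by
      rw [← sub_eq_zero] at ha
      rw [← ha]; module)
    have e3 : a = 1 := sub_eq_zero.1 e1
    rw [e3, one_mul, sub_eq_zero] at e2
    exact Units.ext e2.symm
  have hr : Set.range g = {x : PG F | x ≠ p ∧ x ≠ r ∧ onLine F x (join p r)} := by
    ext x
    constructor
    · rintro ⟨c, rfl⟩
      obtain ⟨a, ha, hx⟩ := rep_mk _ (h0 c)
      refine ⟨fun e => ?_, fun e => ?_, ?_⟩
      · rw [show mk F _ (h0 c) = p from e] at hx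
        have := (li (a - 1) (a * c) (by
          nth_rewrite 1 [← sub_eq_zero] at hx
          rw [← neg_eq_zero, ← hx]; module)).2
        exact mul_ne_zero ha c.ne_zero this
      · rw [show mk F _ (h0 c) = r from e] at hx
        exact ha (li a (a * c - 1) (by
          nth_rewrite 1 [← sub_eq_zero] at hx
          rw [← neg_eq_zero, ← hx]; module)).1
      · exact (onLine_mk _ _ _).2 (Submodule.mem_span_pair.2 ⟨1, c, by rw [one_smul]⟩)
    · rintro ⟨hp, hr, hL⟩
      obtain ⟨a, b, hab⟩ := (onLine_join _ _ _).1 hL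
      have ha : a ≠ 0 := by
        rintro rfl
        exact hr (eq_of_rep _ _ b (by rw [← hab]; simp))
      have hb : b ≠ 0 := by
        rintro rfl
        exact hp (eq_of_rep _ _ a (by rw [← hab]; simp))
      refine ⟨Units.mk0 (b / a) (div_ne_zero hb ha), (eq_mk_of_rep _ _ _ a ?_).symm⟩
      rw [← hab, smul_add, smul_smul, Units.val_mk0, mul_div_cancel₀ _ ha]
  rw [← hr, ← Nat.card_coe_set_eq, Nat.card_range_of_injective hg, Nat.card_eq_fintype_card,
    Fintype.card_units]

lemma count_zero (S : Set (PG F)) (X : PG F)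
    (h : ∀ v ∈ S, ∀ w ∈ S, v ≠ w → ¬ onLine F X (join v w)) : bisecantCount F S X = 0 := by
  rw [bisecantCount, Nat.card_eq_zero]
  left
  refine ⟨fun ⟨L, ⟨hL1, hL2⟩, hX⟩ => ?_⟩
  change Nat.card {p | p ∈ S ∧ onLine F p L} = 2 at hL2
  rw [Nat.card_coe_set_eq, Set.ncard_eq_two] at hL2
  obtain ⟨v, w, hvw, e⟩ := hL2
  have hv : v ∈ {p | p ∈ S ∧ onLine F p L} := by rw [e]; simp
  have hw : w ∈ {p | p ∈ S ∧ onLine F p L} := by rw [e]; simp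
  refine h v hv.1 w hw.1 hvw ?_
  rw [← line_eq_join L hL1 v w hvw hv.2 hw.2]
  exact hX

lemma count_nucleus (h2 : (2 : F) = 0) (S : Set (PG F)) (hS : S ⊆ conicSet F) (O : PG F)
    (h0 : O.rep 0 = 0) (h3 : O.rep 2 = 0) : bisecantCount F S O = 0 := by
  refine count_zero S O fun v hv w hw hvw h => ?_
  obtain ⟨a, b, hab⟩ := (onLine_join _ _ _).1 h
  have hb : bf v.rep w.rep ≠ 0 := fun h => hvw (eq_of_bf h2 v w (hS hv) (hS hw) h)
  have e1 : bf v.rep O.rep = 0 := by simp [bf, h0, h3]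
  have e2 : bf w.rep O.rep = 0 := by simp [bf, h0, h3]
  rw [← hab, bf_comb, bf_self h2, mul_zero, zero_add] at e1
  rw [← hab, bf_comb, bf_self h2, bf_comm, mul_zero, add_zero] at e2
  apply O.rep_nonzero
  rw [← hab, (mul_eq_zero.1 e1).resolve_right hb, (mul_eq_zero.1 e2).resolve_right hb]
  simp

lemma count_conic (h2 : (2 : F) = 0) (S : Set (PG F)) (hS : S ⊆ conicSet F) (P : PG F)
    (hP : P ∈ conicSet F) (hPS : P ∉ S) : bisecantCount F S P = 0 := by
  refine count_zero S P fun v hv w hw hvw h => ?_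
  obtain ⟨a, b, hab⟩ := (onLine_join _ _ _).1 h
  have hb : bf v.rep w.rep ≠ 0 := fun h => hvw (eq_of_bf h2 v w (hS hv) (hS hw) h)
  rw [mem_conic, ← hab, qf_comb h2, (mem_conic v).1 (hS hv), (mem_conic w).1 (hS hw), mul_zero,
    mul_zero, zero_add, add_zero] at hP
  rcases mul_eq_zero.1 ((mul_eq_zero.1 hP).resolve_right hb) with rfl | rfl
  · exact hPS (eq_of_rep P w b (by rw [← hab]; simp) ▸ hw)
  · exact hPS (eq_of_rep P v a (by rw [← hab]; simp) ▸ hv)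

/-- The nucleus is `(0,1,0)`, the common point of the tangents `x₀ = 0` and `x₂ = 0`. -/
lemma nucleus_coords (O : PG F)
    (hO : ∀ L : Submodule F (Fin 3 → F), isTangent F (conicSet F) L → onLine F O L) :
    O.rep 0 = 0 ∧ O.rep 2 = 0 := by
  have main : ∀ i j : Fin 3, (∀ v : Fin 3 → F, qf v = v i * v j - v 1 ^ 2) → i ≠ 1 → j ≠ 1 →
      i ≠ j → O.rep i = 0 := by
    intro i j hq hi hj hij
    have hs : (Pi.single j 1 : Fin 3 → F) ≠ 0 := by simp
    have ht : isTangent F (conicSet F) (LinearMap.ker (LinearMap.proj (R := F)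
        (φ := fun _ : Fin 3 => F) i)) := by
      constructor
      · have h1 := LinearMap.finrank_range_add_finrank_ker (LinearMap.proj (R := F)
          (φ := fun _ : Fin 3 => F) i)
        rw [LinearMap.range_eq_top.2 (LinearMap.proj_surjective i), finrank_top,
          Module.finrank_self, Module.finrank_fin_fun] at h1
        rw [isLine]
        omega
      · have e : {p : PG F | p ∈ conicSet F ∧ onLine F p (LinearMap.ker (LinearMap.proj (R := F)
            (φ := fun _ : Fin 3 => F) i))} = {mk F _ hs} := by
          ext p
          constructor
          · rintro ⟨hp, hpL⟩
            rw [mem_conic, hq] at hp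
            rw [onLine_iff, LinearMap.mem_ker, LinearMap.proj_apply] at hpL
            have h1 : p.rep 1 = 0 := by simpa [hpL] using hp
            refine eq_mk_of_rep p _ hs (p.rep j) ?_
            ext k
            have hk : k = i ∨ k = j ∨ k = 1 := by omega
            rcases hk with rfl | rfl | rfl
            · simp [hpL, hij]
            · simp
            · simp [h1, hj.symm]
          · rintro rfl
            refine ⟨?_, ?_⟩
            · rw [mk_mem_conic, hq]
              simp [hij, hj.symm]
            · rw [onLine_mk]
              simp [hij]
        change Nat.card {p : PG F | _} = 1
        rw [Nat.card_coe_set_eq, e, Set.ncard_singleton]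
    have := hO _ ht
    rwa [onLine_iff, LinearMap.mem_ker, LinearMap.proj_apply] at this
  exact ⟨main 0 2 (fun v => rfl) (by decide) (by decide) (by decide),
    main 2 0 (fun v => by rw [qf]; ring) (by decide) (by decide) (by decide)⟩

/-- The tangent at `P`, deprived of `P` and the nucleus. -/
lemma tangent_iff (h2 : (2 : F) = 0) (O P Q : PG F) (h0 : O.rep 0 = 0) (h3 : O.rep 2 = 0)
    (hP : P ∈ conicSet F) :
    (Q ∉ conicSet F ∧ Q ≠ O ∧ bf Q.rep P.rep = 0) ↔
      (Q ≠ P ∧ Q ≠ O ∧ onLine F Q (join P O)) := by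
  have hO1 : O.rep 1 ≠ 0 := by
    intro h1
    apply O.rep_nonzero
    ext i; fin_cases i
    exacts [h0, h1, h3]
  constructor
  · rintro ⟨hQ, hQO, hb⟩
    refine ⟨fun h => hQ (h ▸ hP), hQO, ?_⟩
    have hb' : Q.rep 0 * P.rep 2 = P.rep 0 * Q.rep 2 := by
      rw [bf] at hb
      linear_combination hb - Q.rep 2 * P.rep 0 * h2
    obtain ⟨a, ha0, ha2⟩ : ∃ a : F, Q.rep 0 = a * P.rep 0 ∧ Q.rep 2 = a * P.rep 2 := by
      by_cases hp0 : P.rep 0 = 0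
      · have hp2 : P.rep 2 ≠ 0 := by
          intro hp2
          have hp1 : P.rep 1 = 0 := by simpa [mem_conic, qf, hp0] using hP
          apply P.rep_nonzero
          ext i; fin_cases i
          exacts [hp0, hp1, hp2]
        refine ⟨Q.rep 2 / P.rep 2, ?_, ?_⟩
        · field_simp; linear_combination hb'
        · field_simp
      · refine ⟨Q.rep 0 / P.rep 0, ?_, ?_⟩
        · field_simp
        · field_simp; linear_combination -hb'
    refine (onLine_join _ _ _).2 ⟨a, (Q.rep 1 - a * P.rep 1) / O.rep 1, ?_⟩
    ext i; fin_cases i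
    · simp [h0, ha0]
    · simp [hO1]
    · simp [h3, ha2]
  · rintro ⟨hQP, hQO, hL⟩
    obtain ⟨a, b, hab⟩ := (onLine_join _ _ _).1 hL
    have hb : b ≠ 0 := by
      rintro rfl
      exact hQP (eq_of_rep _ _ a (by rw [← hab]; simp))
    have e1 : bf P.rep O.rep = 0 := by simp [bf, h0, h3]
    refine ⟨?_, hQO, ?_⟩
    · rw [mem_conic, ← hab, qf_comb h2, e1, (mem_conic P).1 hP]
      simp [qf, h0, hb, hO1]
    · rw [bf_comm, ← hab, bf_comb, bf_self h2, e1]; ring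

/-- The secant `P₁P₂`, deprived of `P₁` and `P₂`. -/
lemma secant_iff (h2 : (2 : F) = 0) (O P₁ P₂ Q : PG F) (h0 : O.rep 0 = 0) (h3 : O.rep 2 = 0)
    (hP1 : P₁ ∈ conicSet F) (hP2 : P₂ ∈ conicSet F) (hne : P₁ ≠ P₂) :
    (Q ∉ conicSet F ∧ Q ≠ O ∧ onLine F Q (join P₁ P₂)) ↔
      (Q ≠ P₁ ∧ Q ≠ P₂ ∧ onLine F Q (join P₁ P₂)) := by
  constructor
  · rintro ⟨hQ, -, hL⟩
    exact ⟨fun h => hQ (h ▸ hP1), fun h => hQ (h ▸ hP2), hL⟩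
  · rintro ⟨hQ1, hQ2, hL⟩
    obtain ⟨a, b, hab⟩ := (onLine_join _ _ _).1 hL
    have hB : bf P₁.rep P₂.rep ≠ 0 := fun h => hne (eq_of_bf h2 _ _ hP1 hP2 h)
    have ha : a ≠ 0 := by
      rintro rfl
      exact hQ2 (eq_of_rep _ _ b (by rw [← hab]; simp))
    have hb : b ≠ 0 := by
      rintro rfl
      exact hQ1 (eq_of_rep _ _ a (by rw [← hab]; simp))
    refine ⟨?_, ?_, hL⟩
    · rw [mem_conic, ← hab, qf_comb h2, (mem_conic _).1 hP1, (mem_conic _).1 hP2]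
      simp [ha, hb, hB]
    · rintro rfl
      have e1 : bf P₁.rep Q.rep = 0 := by simp [bf, h0, h3]
      rw [← hab, bf_comb, bf_self h2] at e1
      simp [hb, hB] at e1

end DSC

/-- Proposition 5.8(ii): let `q ≥ 7` be even (a power of 2, being the cardinality of a
field), `K` the conic in `PG(2,q)` with nucleus `O`, `P₁ ≠ P₂` points of `K`, and
`K** = K \ {P₁, P₂}`. The points off `K**` split into: `3(q-1)` points each on exactly
`(q-2)/2` bisecants of `K**`, `(q-1)(q-2)` points each on exactly `(q-4)/2` bisecants
of `K**`, and `3` points (`O`, `P₁`, `P₂`) on `0` bisecants of `K**`. -/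
theorem doubly_shortened_conic_even_point_classes (F : Type) [Field F] [Fintype F]
    (q : ℕ) (hq : Fintype.card F = q) (hq7 : 7 ≤ q) (heven : Even q)
    (O : Projectivization F (Fin 3 → F)) (hO1 : O ∉ conicSet F)
    (hO : ∀ L : Submodule F (Fin 3 → F), isTangent F (conicSet F) L → onLine F O L)
    (P₁ P₂ : Projectivization F (Fin 3 → F)) (hP1 : P₁ ∈ conicSet F)
    (hP2 : P₂ ∈ conicSet F) (hne : P₁ ≠ P₂) :
    Nat.card {p : Projectivization F (Fin 3 → F) // p ∉ conicSet F \ {P₁, P₂} ∧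
        bisecantCount F (conicSet F \ {P₁, P₂}) p = (q - 2) / 2} = 3 * (q - 1) ∧
    Nat.card {p : Projectivization F (Fin 3 → F) // p ∉ conicSet F \ {P₁, P₂} ∧
        bisecantCount F (conicSet F \ {P₁, P₂}) p = (q - 4) / 2} = (q - 1) * (q - 2) ∧
    Nat.card {p : Projectivization F (Fin 3 → F) // p ∉ conicSet F \ {P₁, P₂} ∧
        bisecantCount F (conicSet F \ {P₁, P₂}) p = 0} = 3 ∧
    bisecantCount F (conicSet F \ {P₁, P₂}) O = 0 ∧
    bisecantCount F (conicSet F \ {P₁, P₂}) P₁ = 0 ∧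
    bisecantCount F (conicSet F \ {P₁, P₂}) P₂ = 0 := by
  classical
  have h2 : (2 : F) = 0 := by
    have h := FiniteField.even_card_iff_char_two.2
      (show Fintype.card F % 2 = 0 by rw [hq]; exact Nat.even_iff.1 heven)
    have := CharP.cast_eq_zero F (ringChar F)
    rw [h] at this
    exact_mod_cast this
  obtain ⟨h0, h3⟩ := DSC.nucleus_coords O hO
  set S : Set (DSC.PG F) := conicSet F \ {P₁, P₂} with hS
  have hSK : S ⊆ conicSet F := Set.sdiff_subset
  have hO0 : bisecantCount F S O = 0 := DSC.count_nucleus h2 S hSK O h0 h3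
  have hP10 : bisecantCount F S P₁ = 0 := DSC.count_conic h2 S hSK P₁ hP1 (by simp [hS])
  have hP20 : bisecantCount F S P₂ = 0 := DSC.count_conic h2 S hSK P₂ hP2 (by simp [hS])
  have hOP1 : O ≠ P₁ := fun h => hO1 (h ▸ hP1)
  have hOP2 : O ≠ P₂ := fun h => hO1 (h ▸ hP2)
  -- the sides of the triangle `O P₁ P₂` without their endpoints
  set S₁ : Set (DSC.PG F) := {x | x ≠ P₁ ∧ x ≠ O ∧ onLine F x (DSC.join P₁ O)} with hS1
  set S₂ : Set (DSC.PG F) := {x | x ≠ P₂ ∧ x ≠ O ∧ onLine F x (DSC.join P₂ O)} with hS2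
  set S₃ : Set (DSC.PG F) := {x | x ≠ P₁ ∧ x ≠ P₂ ∧ onLine F x (DSC.join P₁ P₂)} with hS3
  have m1 : ∀ x, x ∈ S₁ ↔ x ∉ conicSet F ∧ x ≠ O ∧ DSC.bf x.rep P₁.rep = 0 := fun x =>
    (DSC.tangent_iff h2 O P₁ x h0 h3 hP1).symm
  have m2 : ∀ x, x ∈ S₂ ↔ x ∉ conicSet F ∧ x ≠ O ∧ DSC.bf x.rep P₂.rep = 0 := fun x =>
    (DSC.tangent_iff h2 O P₂ x h0 h3 hP2).symm
  have m3 : ∀ x, x ∈ S₃ ↔ x ∉ conicSet F ∧ x ≠ O ∧ onLine F x (DSC.join P₁ P₂) := fun x =>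
    (DSC.secant_iff h2 O P₁ P₂ x h0 h3 hP1 hP2 hne).symm
  have hcoord : ∀ x : DSC.PG F, x ≠ O → ¬ (x.rep 0 = 0 ∧ x.rep 2 = 0) := by
    rintro x hx ⟨hx0, hx2⟩
    have hO' : O.rep 1 ≠ 0 := by
      intro h1
      apply O.rep_nonzero
      ext i; fin_cases i
      exacts [h0, h1, h3]
    refine hx (DSC.eq_of_rep x O (x.rep 1 / O.rep 1) ?_)
    ext i; fin_cases i
    · simp [hx0, h0]
    · simp [hO']
    · simp [hx2, h3]
  have d12 : Disjoint S₁ S₂ := by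
    rw [Set.disjoint_left]
    intro x hx1 hx2
    rw [m1] at hx1
    rw [m2] at hx2
    obtain ⟨t, -, ht⟩ := DSC.exists_tangent_pt h2 x (hcoord x hx1.2.1)
    exact hne (((ht _ hP1).1 hx1.2.2).trans ((ht _ hP2).1 hx2.2.2).symm)
  -- a point conjugate to one endpoint of the secant `P₁P₂` and lying on it is that endpoint
  have d123 : Disjoint (S₁ ∪ S₂) S₃ := by
    rw [Set.disjoint_left]
    rintro x hx hx3
    obtain ⟨hx31, hx32, hL⟩ := hx3
    obtain ⟨a, b, hab⟩ := (DSC.onLine_join _ _ _).1 hL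
    have hB : DSC.bf P₁.rep P₂.rep ≠ 0 := fun h => hne (DSC.eq_of_bf h2 _ _ hP1 hP2 h)
    rcases hx with hx | hx
    · have e := ((m1 x).1 hx).2.2
      rw [DSC.bf_comm, ← hab, DSC.bf_comb, DSC.bf_self h2, mul_zero, zero_add] at e
      refine hx31 (DSC.eq_of_rep _ _ a ?_)
      rw [← hab, (mul_eq_zero.1 e).resolve_right hB]; simp
    · have e := ((m2 x).1 hx).2.2
      rw [DSC.bf_comm, ← hab, DSC.bf_comb, DSC.bf_self h2, mul_zero, add_zero, DSC.bf_comm] at e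
      refine hx32 (DSC.eq_of_rep _ _ b ?_)
      rw [← hab, (mul_eq_zero.1 e).resolve_right hB]; simp
  have hfin : Finite (DSC.PG F) := inferInstance
  set A : Set (DSC.PG F) := (S₁ ∪ S₂) ∪ S₃ with hA
  have hAcard : A.ncard = 3 * (q - 1) := by
    rw [hA, Set.ncard_union_eq d123, Set.ncard_union_eq d12, hS1, hS2, hS3,
      DSC.side_card _ _ hOP1.symm, DSC.side_card _ _ hOP2.symm, DSC.side_card _ _ hne, hq]
    ring
  have hAK : ∀ x ∈ A, x ∉ conicSet F ∧ x ≠ O := by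
    rintro x ((hx | hx) | hx)
    · exact ⟨((m1 x).1 hx).1, ((m1 x).1 hx).2.1⟩
    · exact ⟨((m2 x).1 hx).1, ((m2 x).1 hx).2.1⟩
    · exact ⟨((m3 x).1 hx).1, ((m3 x).1 hx).2.1⟩
  have hcount : ∀ x, x ∉ conicSet F → x ≠ O →
      2 * bisecantCount F S x + (if x ∈ A then 3 else 5) = q + 1 := by
    intro x hx hxO
    rw [← hq]
    refine DSC.bis_count h2 x hx (hcoord x hxO) P₁ P₂ hP1 hP2 hne _ ?_
    have hx1 : x ≠ P₁ := fun h => hx (h ▸ hP1)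
    have hcol : onLine F x (DSC.join P₁ P₂) ↔ onLine F P₂ (DSC.join x P₁) := by
      constructor
      · intro h
        rw [← DSC.line_eq_join _ (DSC.isLine_join _ _ hne) x P₁ hx1 h (DSC.onLine_join_left _ _)]
        exact DSC.onLine_join_right _ _
      · intro h
        rw [← DSC.line_eq_join _ (DSC.isLine_join _ _ hx1) P₁ P₂ hne
          (DSC.onLine_join_right _ _) h]
        exact DSC.onLine_join_left _ _
    rw [hA, Set.mem_union, Set.mem_union, m1, m2, m3, ← hcol]
    tauto
  -- the points off `S` are `O`, `P₁`, `P₂`, the points of `A`, and the remaining ones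
  have hcases : ∀ x, x ∉ S → ((x = O ∨ x = P₁ ∨ x = P₂) ∧ bisecantCount F S x = 0 ∧ x ∉ A) ∨
      (¬ (x = O ∨ x = P₁ ∨ x = P₂) ∧ x ∈ A ∧ 2 * bisecantCount F S x + 3 = q + 1) ∨
      (¬ (x = O ∨ x = P₁ ∨ x = P₂) ∧ x ∉ A ∧ 2 * bisecantCount F S x + 5 = q + 1) := by
    intro x hx
    by_cases hxO : x = O
    · left
      subst hxO
      exact ⟨Or.inl rfl, hO0, fun h => (hAK x h).2 rfl⟩
    by_cases hxK : x ∈ conicSet F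
    · left
      have hx' : x = P₁ ∨ x = P₂ := by
        by_contra hc
        exact hx ⟨hxK, hc⟩
      refine ⟨Or.inr hx', ?_, fun h => (hAK x h).1 hxK⟩
      rcases hx' with rfl | rfl
      · exact hP10
      · exact hP20
    · right
      have hn : ¬ (x = O ∨ x = P₁ ∨ x = P₂) := by
        rintro (h | rfl | rfl)
        · exact hxO h
        · exact hxK hP1
        · exact hxK hP2
      have hc := hcount x hxK hxO
      by_cases hxA : x ∈ A
      · rw [if_pos hxA] at hc
        exact Or.inl ⟨hn, hxA, hc⟩
      · rw [if_neg hxA] at hc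
        exact Or.inr ⟨hn, hxA, hc⟩
  have hOS : O ∉ S := fun h => hO1 h.1
  have hP1S : P₁ ∉ S := by simp [hS]
  have hP2S : P₂ ∉ S := by simp [hS]
  obtain ⟨m, hm⟩ := heven
  refine ⟨?_, ?_, ?_, hO0, hP10, hP20⟩
  · change Nat.card {p : DSC.PG F | p ∉ S ∧ bisecantCount F S p = (q - 2) / 2} = _
    rw [Nat.card_coe_set_eq, ← hAcard]
    congr 1
    ext x
    constructor
    · rintro ⟨hx, hb⟩
      rcases hcases x hx with ⟨-, h, -⟩ | ⟨-, h, -⟩ | ⟨-, -, h⟩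
      · omega
      · exact h
      · omega
    · intro hx
      have hxS : x ∉ S := fun h => (hAK x hx).1 h.1
      refine ⟨hxS, ?_⟩
      rcases hcases x hxS with ⟨-, -, h⟩ | ⟨-, -, h⟩ | ⟨-, h, -⟩
      · exact absurd hx h
      · omega
      · exact absurd hx h
  · change Nat.card {p : DSC.PG F | p ∉ S ∧ bisecantCount F S p = (q - 4) / 2} = _
    have e : {p : DSC.PG F | p ∉ S ∧ bisecantCount F S p = (q - 4) / 2} =
        ((conicSet F ∪ {O}) ∪ A)ᶜ := by
      ext x
      simp only [Set.mem_ofPred_eq, Set.mem_compl_iff, Set.mem_union, Set.mem_singleton_iff,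
        not_or]
      constructor
      · rintro ⟨hx, hb⟩
        rcases hcases x hx with ⟨-, h, -⟩ | ⟨-, -, h⟩ | ⟨h, hxA, -⟩
        · omega
        · omega
        · rw [not_or] at h
          exact ⟨⟨fun hK => hx ⟨hK, h.2⟩, h.1⟩, hxA⟩
      · rintro ⟨⟨hK, hxO⟩, hxA⟩
        refine ⟨fun h => hK h.1, ?_⟩
        have hc := hcount x hK hxO
        rw [if_neg hxA] at hc
        omega
    have hK : (conicSet F).ncard = q + 1 := by
      rw [← hq, ← Nat.card_coe_set_eq]
      exact DSC.card_conic
    have hU : ((conicSet F ∪ {O}) ∪ A).ncard = q + 1 + 1 + 3 * (q - 1) := by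
      rw [Set.ncard_union_eq, Set.ncard_union_eq, hK, Set.ncard_singleton, hAcard]
      · exact Set.disjoint_singleton_right.2 hO1
      · rw [Set.disjoint_right]
        rintro x hx (h | h)
        · exact (hAK x hx).1 h
        · exact (hAK x hx).2 h
    have hT : Nat.card (DSC.PG F) = 1 + q + q ^ 2 := by
      rw [Projectivization.card_of_finrank F (Fin 3 → F) (n := 3) (by simp),
        Nat.card_eq_fintype_card, hq]
      simp [Finset.sum_range_succ]
    have hsum := Set.ncard_add_ncard_compl ((conicSet F ∪ {O}) ∪ A)
    rw [hU, hT] at hsum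
    rw [Nat.card_coe_set_eq, e]
    obtain ⟨k, rfl⟩ := Nat.exists_eq_add_of_le hq7
    simp only [show 7 + k - 1 = k + 6 by omega, show 7 + k - 2 = k + 5 by omega] at hsum ⊢
    nlinarith
  · change Nat.card {p : DSC.PG F | p ∉ S ∧ bisecantCount F S p = 0} = _
    rw [Nat.card_coe_set_eq, Set.ncard_eq_three]
    refine ⟨O, P₁, P₂, hOP1, hOP2, hne, ?_⟩
    ext x
    simp only [Set.mem_ofPred_eq, Set.mem_insert_iff, Set.mem_singleton_iff]
    constructor
    · rintro ⟨hx, hb⟩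
      rcases hcases x hx with ⟨h, -⟩ | ⟨-, -, h⟩ | ⟨-, -, h⟩
      · exact h
      · omega
      · omega
    · rintro (rfl | rfl | rfl)
      · exact ⟨hOS, hO0⟩
      · exact ⟨hP1S, hP10⟩
      · exact ⟨hP2S, hP20⟩
end
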